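/- arXiv:1609.09378 — 3 statements merged into one kernel-verified Lean document; each statement's English description precedes it below -/
import Mathlib

section
/- Let g : V → (−∞,+∞] be a weakly lower semicontinuous function on a separable real Hilbert space V, not identically +∞, such that its biconjugate g** is proper and coercive. Let G be the set of global minimizers of g and G** the set of global minimizers of g**. Then: (i) G** is a closed, bounded, convex set containing G; (ii) every extreme point of G** belongs to G; (iii) the closed convex hull of the set of extreme points of G** equals G**. -/
open scoped InnerProductSpace RealInnerProductSpace ENNReal Topology
open Filter

noncomputable section

/-- The Legendre transform (Fenchel conjugate) of an extended-real-valued function. -/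
def legendre {V : Type*} [NormedAddCommGroup V] [InnerProductSpace ℝ V]
    (g : V → EReal) (y : V) : EReal :=
  ⨆ x : V, (((⟪x, y⟫_ℝ : ℝ) : EReal) - g x)

/-! The functions `g` and `g**` have the same infimum `m`, so `G**` is the sublevel set
`{g** ≤ m}`. Fix `x ∈ G**` and a slope `y`. For small `ε > 0` we have
`g*(ε y) ≥ ⟨x, ε y⟩ - g**(x) ≥ ⟨x, ε y⟩ - m`, and a near-maximizer `z` in the definition of
`g*(ε y)` satisfies `g(z) ≤ m + ε (⟨z - x, y⟩ + δ)`. Being convex and coercive, `g** ≤ g` grows at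
least linearly away from `x`; for `ε` small enough in terms of `δ` this forces `g(z) ≤ m + δ`, while
`g(z) ≥ m` gives `⟨x, y⟩ ≤ ⟨z, y⟩ + δ`. Letting `δ → 0`, weak compactness produces a minimizer `z`
of `g` with `⟨x, y⟩ ≤ ⟨z, y⟩`. By Hahn–Banach, `G**` is therefore the closed convex hull of the
weakly compact set `G`, and the theorems of Milman and Krein–Milman in the weak topology conclude.
-/

section Milman

variable {E : Type*} [AddCommGroup E] [Module ℝ E] [TopologicalSpace E]
  [IsTopologicalAddGroup E] [ContinuousSMul ℝ E]

theorem isCompact_convexJoin {s t : Set E} (hs : IsCompact s) (ht : IsCompact t) :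
    IsCompact (convexJoin ℝ s t) := by
  have image_eq : convexJoin ℝ s t =
      (fun p : ℝ × E × E => (1 - p.1) • p.2.1 + p.1 • p.2.2) '' (Set.Icc 0 1 ×ˢ s ×ˢ t) := by
    ext x
    simp only [mem_convexJoin, segment_eq_image, Set.mem_image, Set.mem_prod, Prod.exists]
    tauto
  rw [image_eq]
  exact (isCompact_Icc.prod (hs.prod ht)).image (by fun_prop)

theorem closedConvexHull_union_subset_convexJoin [T2Space E] {s t : Set E}
    (hs : IsCompact (closedConvexHull ℝ s)) (ht : IsCompact (closedConvexHull ℝ t))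
    (hs₀ : s.Nonempty) (ht₀ : t.Nonempty) :
    closedConvexHull ℝ (s ∪ t) ⊆ convexJoin ℝ (closedConvexHull ℝ s) (closedConvexHull ℝ t) := by
  refine closedConvexHull_min (Set.union_subset ?_ ?_)
    (convex_closedConvexHull.convexJoin convex_closedConvexHull)
    (isCompact_convexJoin hs ht).isClosed
  · exact subset_closedConvexHull.trans
      (subset_convexJoin_left (ht₀.mono subset_closedConvexHull))
  · exact subset_closedConvexHull.trans
      (subset_convexJoin_right (hs₀.mono subset_closedConvexHull))

theorem mem_closedConvexHull_or_of_mem_extremePoints [T2Space E] {K s t : Set E} {x : E}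
    (hK : IsCompact K) (hKconv : Convex ℝ K) (hs : s ⊆ K) (ht : t ⊆ K)
    (hx : x ∈ K.extremePoints ℝ) (hxst : x ∈ closedConvexHull ℝ (s ∪ t)) :
    x ∈ closedConvexHull ℝ s ∨ x ∈ closedConvexHull ℝ t := by
  rcases s.eq_empty_or_nonempty with rfl | hs₀
  · exact .inr (Set.empty_union t ▸ hxst)
  rcases t.eq_empty_or_nonempty with rfl | ht₀
  · exact .inl (Set.union_empty s ▸ hxst)
  have hull_subset {u : Set E} (hu : u ⊆ K) : closedConvexHull ℝ u ⊆ K :=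
    closedConvexHull_min hu hKconv hK.isClosed
  have hull_compact {u : Set E} (hu : u ⊆ K) : IsCompact (closedConvexHull ℝ u) :=
    hK.of_isClosed_subset isClosed_closedConvexHull (hull_subset hu)
  obtain ⟨a, ha, b, hb, hxab⟩ := mem_convexJoin.1
    (closedConvexHull_union_subset_convexJoin (hull_compact hs) (hull_compact ht) hs₀ ht₀ hxst)
  rcases (mem_extremePoints_iff_forall_segment.1 hx).2 a (hull_subset hs ha) b (hull_subset ht hb)
    hxab with rfl | rfl
  · exact .inl ha
  · exact .inr hb

variable [T2Space E] [LocallyConvexSpace ℝ E]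

theorem exists_mem_nhds_notMem_closedConvexHull {x z : E} (hzx : z ≠ x) :
    ∃ t ∈ 𝓝 z, x ∉ closedConvexHull ℝ t := by
  obtain ⟨u, hu, hu_closed, hxu⟩ := exists_mem_nhds_isClosed_subset (isOpen_ne.mem_nhds hzx)
  obtain ⟨t, ⟨ht, ht_convex⟩, htu : t ⊆ u⟩ :=
    (LocallyConvexSpace.convex_basis (𝕜 := ℝ) z).mem_iff.1 hu
  have hull_subset : closedConvexHull ℝ t ⊆ u :=
    (closedConvexHull_min subset_closure ht_convex.closure isClosed_closure).trans
      (closure_minimal htu hu_closed)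
  exact ⟨t, ht, fun hxt => hxu (hull_subset hxt) rfl⟩

/-- **Milman's theorem**, the partial converse of the Krein–Milman theorem. -/
theorem extremePoints_closedConvexHull_subset {s : Set E} (hs : IsCompact s)
    (hK : IsCompact (closedConvexHull ℝ s)) :
    (closedConvexHull ℝ s).extremePoints ℝ ⊆ s := by
  intro x hx
  by_contra hxs
  have inter_subset (t : Set E) : t ∩ s ⊆ closedConvexHull ℝ s :=
    Set.inter_subset_right.trans subset_closedConvexHull
  have notMem_hull : x ∉ closedConvexHull ℝ (s ∩ s) := by
    refine hs.induction_on (p := fun t => x ∉ closedConvexHull ℝ (t ∩ s)) ?_ ?_ ?_ ?_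
    · simp [closedConvexHull_eq_closure_convexHull]
    · exact fun t u htu hu hxt =>
        hu ((closedConvexHull ℝ).monotone (Set.inter_subset_inter_left s htu) hxt)
    · intro t u ht hu hxtu
      rw [Set.union_inter_distrib_right] at hxtu
      exact (mem_closedConvexHull_or_of_mem_extremePoints hK convex_closedConvexHull
        (inter_subset t) (inter_subset u) hx hxtu).elim ht hu
    · intro z hz
      obtain ⟨t, ht, hxt⟩ := exists_mem_nhds_notMem_closedConvexHull (ne_of_mem_of_not_mem hz hxs)
      exact ⟨t, mem_nhdsWithin_of_mem_nhds ht, fun hxts =>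
        hxt ((closedConvexHull ℝ).monotone Set.inter_subset_left hxts)⟩
  exact notMem_hull ((Set.inter_self s).symm ▸ hx.1)

end Milman

section WeakTopology

instance locallyConvexSpace_weakSpace {E : Type*} [AddCommGroup E] [Module ℝ E]
    [TopologicalSpace E] : LocallyConvexSpace ℝ (WeakSpace ℝ E) :=
  inferInstanceAs (LocallyConvexSpace ℝ (WeakBilin (topDualPairing ℝ E).flip))

variable {E : Type*} [AddCommGroup E] [Module ℝ E] [TopologicalSpace E]
  [IsTopologicalAddGroup E] [ContinuousSMul ℝ E] [LocallyConvexSpace ℝ E] [T2Space E]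

theorem extremePoints_closedConvexHull_subset_of_isCompact_toWeakSpace {s : Set E}
    (hs : IsCompact (toWeakSpace ℝ E '' s))
    (hK : IsCompact (toWeakSpace ℝ E '' closedConvexHull ℝ s)) :
    (closedConvexHull ℝ s).extremePoints ℝ ⊆ s := by
  rw [toWeakSpace_closedConvexHull_eq] at hK
  have h := extremePoints_closedConvexHull_subset hs hK
  rwa [← toWeakSpace_closedConvexHull_eq, ← image_extremePoints,
    Set.image_subset_image_iff (toWeakSpace ℝ E).injective] at h

theorem closedConvexHull_extremePoints_of_isCompact_toWeakSpace {s : Set E}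
    (hs : IsCompact (toWeakSpace ℝ E '' s)) (hconv : Convex ℝ s) :
    closedConvexHull ℝ (s.extremePoints ℝ) = s := by
  apply (toWeakSpace ℝ E).injective.image_injective
  rw [toWeakSpace_closedConvexHull_eq, image_extremePoints,
    closedConvexHull_eq_closure_convexHull]
  exact closure_convexHull_extremePoints hs (hconv.linear_image (toWeakSpace ℝ E).toLinearMap)

end WeakTopology

section Reflexive

variable {𝕜 X : Type*} [RCLike 𝕜]

theorem inclusionInDoubleDual_surjective [NormedAddCommGroup X] [InnerProductSpace 𝕜 X]
    [CompleteSpace X] : Function.Surjective (NormedSpace.inclusionInDoubleDual 𝕜 X) := by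
  intro φ
  let ψ : StrongDual 𝕜 X := (starL 𝕜 : 𝕜 ≃L⋆[𝕜] 𝕜).toContinuousLinearMap.comp
    (φ.comp (InnerProductSpace.toDual 𝕜 X).toContinuousLinearEquiv.toContinuousLinearMap)
  refine ⟨(InnerProductSpace.toDual 𝕜 X).symm ψ, ContinuousLinearMap.ext fun f => ?_⟩
  obtain ⟨v, rfl⟩ := (InnerProductSpace.toDual 𝕜 X).surjective f
  rw [NormedSpace.dual_def, InnerProductSpace.toDual_apply_apply, ← inner_conj_symm,
    InnerProductSpace.toDual_symm_apply]
  exact star_star (φ (InnerProductSpace.toDual 𝕜 X v))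

variable [NormedAddCommGroup X] [NormedSpace 𝕜 X]

theorem isCompact_toWeakSpace_image
    (hX : Function.Surjective (NormedSpace.inclusionInDoubleDual 𝕜 X)) {s : Set X}
    (hb : Bornology.IsBounded s) (hc : IsClosed (toWeakSpace 𝕜 X '' s)) :
    IsCompact (toWeakSpace 𝕜 X '' s) := by
  rw [← hc.closure_eq]
  refine NormedSpace.isCompact_closure_of_isBounded 𝕜 X _
    (by rwa [Set.preimage_image_eq _ (toWeakSpace 𝕜 X).injective]) fun φ _ => ?_
  obtain ⟨x, hx⟩ := hX (WeakDual.toStrongDual φ)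
  exact ⟨toWeakSpace 𝕜 X x, hx⟩

theorem isCompact_toWeakSpace_image_of_convex [NormedSpace ℝ X] [IsScalarTower ℝ 𝕜 X]
    (hX : Function.Surjective (NormedSpace.inclusionInDoubleDual 𝕜 X)) {s : Set X}
    (hb : Bornology.IsBounded s) (hc : IsClosed s) (hconv : Convex ℝ s) :
    IsCompact (toWeakSpace 𝕜 X '' s) := by
  refine isCompact_toWeakSpace_image hX hb (isClosed_of_closure_subset ?_)
  rw [← hconv.toWeakSpace_closure 𝕜, hc.closure_eq]

variable {β : Type*} [LinearOrder β] {f : X → β} {c : β}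

theorem isCompact_toWeakSpace_image_setOf_le
    (hX : Function.Surjective (NormedSpace.inclusionInDoubleDual 𝕜 X))
    (hf : LowerSemicontinuous (α := WeakSpace 𝕜 X) f) (hb : Bornology.IsBounded {x | f x ≤ c}) :
    IsCompact (toWeakSpace 𝕜 X '' {x | f x ≤ c}) := by
  refine isCompact_toWeakSpace_image hX hb ?_
  rw [LinearEquiv.image_eq_preimage_symm]
  exact hf.isClosed_preimage c

theorem exists_forall_le_of_isBounded_setOf_le
    (hX : Function.Surjective (NormedSpace.inclusionInDoubleDual 𝕜 X))
    (hf : LowerSemicontinuous (α := WeakSpace 𝕜 X) f) (hne : ∃ x, f x ≤ c)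
    (hb : Bornology.IsBounded {x | f x ≤ c}) : ∃ x, ∀ y, f x ≤ f y := by
  have hcompact := isCompact_toWeakSpace_image_setOf_le hX hf hb
  rw [LinearEquiv.image_eq_preimage_symm] at hcompact
  obtain ⟨x, hx, hmin⟩ := LowerSemicontinuousOn.exists_isMinOn (α := WeakSpace 𝕜 X) (f := f)
    hne hcompact (hf.lowerSemicontinuousOn _)
  refine ⟨x, fun y => ?_⟩
  rcases le_total (f y) c with hy | hy
  · exact hmin hy
  · exact le_trans hx hy

theorem exists_iInf_eq_coe_of_isBounded_setOf_le
    (hX : Function.Surjective (NormedSpace.inclusionInDoubleDual 𝕜 X)) {f : X → EReal}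
    (hf : LowerSemicontinuous (α := WeakSpace 𝕜 X) f) (hbot : ∀ x, f x ≠ ⊥) (htop : ∃ x, f x ≠ ⊤)
    (hb : ∀ r : ℝ, Bornology.IsBounded {x | f x ≤ r}) : ∃ m : ℝ, ⨅ x, f x = m := by
  obtain ⟨w, hw⟩ := htop
  lift f w to ℝ using ⟨hw, hbot w⟩ with r hr
  obtain ⟨x, hx⟩ := exists_forall_le_of_isBounded_setOf_le hX hf ⟨w, hr.ge⟩ (hb r)
  have hxtop : f x ≠ ⊤ := ((hx w).trans_lt (hr ▸ EReal.coe_lt_top r)).ne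
  exact ⟨(f x).toReal, ((iInf_le f x).antisymm (le_iInf hx)).trans
    (EReal.coe_toReal hxtop (hbot x)).symm⟩

end Reflexive

theorem norm_sub_lt_of_convex_epigraph {E : Type*} [SeminormedAddCommGroup E] [NormedSpace ℝ E]
    {f : E → EReal} (hf : Convex ℝ {p : E × ℝ | f p.1 ≤ p.2}) {x z : E} {m r R : ℝ}
    (hx : f x ≤ m) (hr : 0 ≤ r) (hz : f z ≤ (m + r : ℝ))
    (hR : {w | f w ≤ (m + 1 : ℝ)} ⊆ Metric.ball x R) : ‖z - x‖ < R * (1 + r) := by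
  have hr₁ : 0 < 1 + r := by positivity
  have ht : (1 + r)⁻¹ ∈ Set.Icc (0 : ℝ) 1 := ⟨by positivity, inv_le_one_of_one_le₀ (by linarith)⟩
  have hconv : f (x + (1 + r)⁻¹ • (z - x)) ≤ (m + (1 + r)⁻¹ * r : ℝ) := by
    simpa using hf.add_smul_sub_mem (x := (x, m)) (y := (z, m + r)) hx hz ht
  have hle : (1 + r)⁻¹ * r ≤ 1 := (inv_mul_le_one₀ hr₁).2 (by linarith)
  have hmem : x + (1 + r)⁻¹ • (z - x) ∈ Metric.ball x R :=
    hR (hconv.trans (EReal.coe_le_coe (by linarith)))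
  rwa [mem_ball_iff_norm, add_sub_cancel_left, norm_smul, norm_inv, Real.norm_of_nonneg hr₁.le,
    inv_mul_lt_iff₀' hr₁] at hmem

section Legendre

variable {V : Type*} [NormedAddCommGroup V] [InnerProductSpace ℝ V] {g : V → EReal}

theorem legendre_le_coe_iff {y : V} {c : ℝ} :
    legendre g y ≤ c ↔ ∀ z, ((⟪z, y⟫_ℝ - c : ℝ) : EReal) ≤ g z := by
  refine iSup_le_iff.trans (forall_congr' fun z => ?_)
  induction g z with
  | bot => simp [-EReal.coe_sub]
  | top => simp
  | coe a =>
    norm_cast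
    exact sub_le_comm

theorem isClosed_setOf_legendre_le (c : ℝ) : IsClosed {y | legendre g y ≤ c} := by
  simp only [legendre_le_coe_iff, Set.ofPred_forall]
  exact isClosed_iInter fun z =>
    isClosed_le (continuous_coe_real_ereal.comp (by fun_prop)) continuous_const

theorem convex_epigraph_legendre : Convex ℝ {p : V × ℝ | legendre g p.1 ≤ p.2} := by
  simp only [legendre_le_coe_iff, Set.ofPred_forall]
  refine convex_iInter fun z => ?_
  have hlower : IsLowerSet {t : ℝ | (t : EReal) ≤ g z} := fun s t hts hs =>
    (EReal.coe_le_coe hts).trans hs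
  exact hlower.ordConnected.convex.linear_preimage
    ((innerₗ V z).comp (LinearMap.fst ℝ V ℝ) - LinearMap.snd ℝ V ℝ)

theorem convex_setOf_legendre_le (c : ℝ) : Convex ℝ {y | legendre g y ≤ c} := by
  intro x hx y hy a b ha hb hab
  have hmem := convex_epigraph_legendre (x := (x, c)) hx (y := (y, c)) hy ha hb hab
  simpa [← add_mul, hab] using hmem

theorem legendre_legendre_le (x : V) : legendre (legendre g) x ≤ g x := by
  refine iSup_le fun y => ?_
  have young : ((⟪x, y⟫_ℝ : ℝ) : EReal) - g x ≤ legendre g y :=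
    le_iSup (fun z => ((⟪z, y⟫_ℝ : ℝ) : EReal) - g z) x
  rw [real_inner_comm]
  induction hgx : g x with
  | bot => simp_all
  | top => exact le_top
  | coe a =>
    rw [hgx] at young
    exact EReal.sub_le_of_le_add'
      ((EReal.sub_le_iff_le_add (.inl (EReal.coe_ne_bot a)) (.inl (EReal.coe_ne_top a))).1 young)

theorem iInf_legendre_legendre : ⨅ x, legendre (legendre g) x = ⨅ x, g x := by
  refine le_antisymm (iInf_mono legendre_legendre_le) (le_iInf fun x => ?_)
  have legendre_zero_le : legendre g 0 ≤ -⨅ z, g z := iSup_le fun z => by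
    simpa using iInf_le g z
  refine le_trans ?_ (le_iSup (fun y => ((⟪y, x⟫_ℝ : ℝ) : EReal) - legendre g y) 0)
  simpa using EReal.le_neg_of_le_neg legendre_zero_le

theorem exists_lt_of_legendre_legendre_le {x : V} {m : ℝ}
    (hx : legendre (legendre g) x ≤ m) (y : V) {η : ℝ} (hη : 0 < η) :
    ∃ z, g z < (m + (⟪z - x, y⟫_ℝ + η) : ℝ) := by
  have hy : ¬ legendre g y ≤ (⟪x, y⟫_ℝ - m - η : ℝ) := fun hle => by
    have hlt := EReal.coe_le_coe_iff.1 ((legendre_le_coe_iff.1 hx y).trans hle)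
    rw [real_inner_comm] at hlt
    linarith
  obtain ⟨z, hz⟩ := not_forall.1 (mt legendre_le_coe_iff.2 hy)
  refine ⟨z, (not_le.1 hz).trans_eq (congrArg _ ?_)⟩
  rw [inner_sub_left]
  ring

theorem exists_le_add_and_norm_sub_lt {x : V} {m R : ℝ}
    (hx : legendre (legendre g) x ≤ m) (hm : ∀ z, (m : EReal) ≤ g z)
    (hR : {w | legendre (legendre g) w ≤ (m + 1 : ℝ)} ⊆ Metric.ball x R) (y : V)
    {η : ℝ} (hη : 0 < η) :
    ∃ z, ∃ r ≥ 0, r = ⟪z - x, y⟫_ℝ + η ∧ g z ≤ (m + r : ℝ) ∧ ‖z - x‖ < R * (1 + r) := by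
  obtain ⟨z, hz⟩ := exists_lt_of_legendre_legendre_le hx y hη
  have hr : 0 ≤ ⟪z - x, y⟫_ℝ + η := by
    have hlt := EReal.coe_lt_coe_iff.1 ((hm z).trans_lt hz)
    linarith
  exact ⟨z, _, hr, rfl, hz.le, norm_sub_lt_of_convex_epigraph convex_epigraph_legendre hx hr
    ((legendre_legendre_le z).trans hz.le) hR⟩

theorem exists_le_add_and_inner_sub_le {x : V} {m : ℝ}
    (hx : legendre (legendre g) x ≤ m) (hm : ∀ z, (m : EReal) ≤ g z)
    (hb : Bornology.IsBounded {w | legendre (legendre g) w ≤ (m + 1 : ℝ)}) (y : V)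
    {δ : ℝ} (hδ : 0 < δ) : ∃ z, g z ≤ (m + δ : ℝ) ∧ ⟪x, y⟫_ℝ - ⟪z, y⟫_ℝ ≤ δ := by
  obtain ⟨R, hR, hball⟩ := hb.subset_ball_lt 0 x
  -- This tilt `ε` turns the linear growth bound into `r ≤ δ / (1 + δ) * (1 + r)`, i.e. `r ≤ δ`.
  set ε := δ / ((1 + δ) * (R * ‖y‖ + δ)) with hε
  have hε₀ : 0 < ε := by positivity
  obtain ⟨z, r, hr₀, hr, hgz, hdist⟩ :=
    exists_le_add_and_norm_sub_lt hx hm hball (ε • y) (mul_pos hε₀ hδ)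
  rw [real_inner_smul_right, ← mul_add] at hr
  have hself : r ≤ δ / (1 + δ) * (1 + r) := calc
    r = ε * (⟪z - x, y⟫_ℝ + δ) := hr
    _ ≤ ε * (R * (1 + r) * ‖y‖ + δ * (1 + r)) := by
      gcongr
      · exact (real_inner_le_norm _ _).trans (by gcongr)
      · exact le_mul_of_one_le_right hδ.le (by linarith)
    _ = δ / (1 + δ) * (1 + r) := by
      rw [hε]
      field_simp
  have hrδ : r ≤ δ := by
    rw [div_mul_eq_mul_div, le_div_iff₀ (by positivity)] at hself
    linarith
  have hinner : 0 ≤ ⟪z - x, y⟫_ℝ + δ := nonneg_of_mul_nonneg_right (hr ▸ hr₀) hε₀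
  rw [inner_sub_left] at hinner
  exact ⟨z, hgz.trans (EReal.coe_le_coe (by linarith)), by linarith⟩

end Legendre

section WeakMinimization

variable {V : Type*} [NormedAddCommGroup V] [InnerProductSpace ℝ V] {g : V → EReal}

theorem continuous_weakSpace_inner_left (y : V) :
    Continuous fun z : WeakSpace ℝ V => ⟪(toWeakSpace ℝ V).symm z, y⟫_ℝ := by
  simp only [real_inner_comm y]
  exact WeakBilin.eval_continuous (topDualPairing ℝ V).flip (innerSL ℝ y)

variable [CompleteSpace V]

theorem exists_le_and_inner_le_of_legendre_legendre_le
    (hg : LowerSemicontinuous (α := WeakSpace ℝ V) g) {x : V} {m : ℝ}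
    (hx : legendre (legendre g) x ≤ m) (hm : ∀ z, (m : EReal) ≤ g z)
    (hb : Bornology.IsBounded {z | legendre (legendre g) z ≤ (m + 1 : ℝ)}) (y : V) :
    ∃ z, g z ≤ m ∧ ⟪x, y⟫_ℝ ≤ ⟪z, y⟫_ℝ := by
  -- The maximum `φ` merges the two inequalities, so that one minimization yields both.
  let φ : V → EReal := fun z => g z ⊔ (m + (⟪x, y⟫_ℝ - ⟪z, y⟫_ℝ) : ℝ)
  have hφ : LowerSemicontinuous (α := WeakSpace ℝ V) φ :=
    hg.sup (continuous_coe_real_ereal.comp (continuous_const.add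
      (continuous_const.sub (continuous_weakSpace_inner_left y)))).lowerSemicontinuous
  have hφ_le (δ : ℝ) (hδ : 0 < δ) : ∃ z, φ z ≤ (m + δ : ℝ) := by
    obtain ⟨z, hgz, hzy⟩ := exists_le_add_and_inner_sub_le hx hm hb y hδ
    exact ⟨z, sup_le hgz (EReal.coe_le_coe (by linarith))⟩
  have hφ_bounded : Bornology.IsBounded {z | φ z ≤ (m + 1 : ℝ)} :=
    hb.subset fun z hz => (legendre_legendre_le z).trans (le_sup_left.trans hz)
  obtain ⟨z, hz⟩ := exists_forall_le_of_isBounded_setOf_le inclusionInDoubleDual_surjective hφ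
    (hφ_le 1 one_pos) hφ_bounded
  have hzm : φ z ≤ m := EReal.le_of_forall_lt_iff_le.1 fun c hc => by
    obtain ⟨w, hw⟩ := hφ_le (c - m) (sub_pos.2 (EReal.coe_lt_coe_iff.1 hc))
    exact (hz w).trans (by simpa only [add_sub_cancel] using hw)
  refine ⟨z, le_sup_left.trans hzm, ?_⟩
  have := EReal.coe_le_coe_iff.1 (le_sup_right.trans hzm)
  linarith

theorem closedConvexHull_setOf_le_eq (hg : LowerSemicontinuous (α := WeakSpace ℝ V) g) {m : ℝ}
    (hm : ∀ z, (m : EReal) ≤ g z)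
    (hb : Bornology.IsBounded {z | legendre (legendre g) z ≤ (m + 1 : ℝ)}) :
    closedConvexHull ℝ {x | g x ≤ m} = {x | legendre (legendre g) x ≤ m} := by
  refine (closedConvexHull_min (fun x hx => (legendre_legendre_le x).trans hx)
    (convex_setOf_legendre_le m) (isClosed_setOf_legendre_le m)).antisymm fun x hx => ?_
  by_contra hxC
  obtain ⟨l, s, hls, hsx⟩ :=
    geometric_hahn_banach_closed_point convex_closedConvexHull isClosed_closedConvexHull hxC
  obtain ⟨y, rfl⟩ := (InnerProductSpace.toDual ℝ V).surjective l
  obtain ⟨z, hgz, hxz⟩ := exists_le_and_inner_le_of_legendre_legendre_le hg hx hm hb y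
  have hlt : ⟪y, z⟫_ℝ < ⟪y, x⟫_ℝ := (hls z (subset_closedConvexHull hgz)).trans hsx
  rw [real_inner_comm z, real_inner_comm x] at hlt
  exact hlt.not_ge hxz

end WeakMinimization

/-- The set of global minimizers of a function, written out as an inequality against every value so
that no infimum is involved. -/
def globalMinimizers {α β : Type*} [LE β] (f : α → β) : Set α :=
  {x | ∀ y, f x ≤ f y}

theorem globalMinimizers_eq_setOf_le_iInf {α β : Type*} [CompleteLattice β] (f : α → β) :
    globalMinimizers f = {x | f x ≤ ⨅ y, f y} :=
  Set.ext fun _ => le_iInf_iff.symm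

theorem statement12_general {V : Type*} [NormedAddCommGroup V] [InnerProductSpace ℝ V]
    [CompleteSpace V] (g : V → EReal)
    (hwlsc : LowerSemicontinuous (α := WeakSpace ℝ V) g)
    (hnebot : ∀ x, g x ≠ ⊥) (hproper : ∃ x, g x ≠ ⊤)
    (hcoercive : ∀ r : ℝ, Bornology.IsBounded {x : V | legendre (legendre g) x ≤ (r : EReal)}) :
    IsClosed (globalMinimizers (legendre (legendre g))) ∧
    Bornology.IsBounded (globalMinimizers (legendre (legendre g))) ∧
    Convex ℝ (globalMinimizers (legendre (legendre g))) ∧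
    globalMinimizers g ⊆ globalMinimizers (legendre (legendre g)) ∧
    (globalMinimizers (legendre (legendre g))).extremePoints ℝ ⊆ globalMinimizers g ∧
    closure (convexHull ℝ ((globalMinimizers (legendre (legendre g))).extremePoints ℝ)) =
      globalMinimizers (legendre (legendre g)) := by
  have bounded_sublevel (r : ℝ) : Bornology.IsBounded {x | g x ≤ r} :=
    (hcoercive r).subset fun x hx => (legendre_legendre_le x).trans hx
  obtain ⟨m, hm⟩ := exists_iInf_eq_coe_of_isBounded_setOf_le inclusionInDoubleDual_surjective hwlsc
    hnebot hproper bounded_sublevel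
  simp only [globalMinimizers_eq_setOf_le_iInf, iInf_legendre_legendre, hm]
  have hclosed := isClosed_setOf_legendre_le (g := legendre g) m
  have hconvex := convex_setOf_legendre_le (g := legendre g) m
  have hull_eq := closedConvexHull_setOf_le_eq hwlsc (fun z => hm ▸ iInf_le g z) (hcoercive (m + 1))
  have hcompact : IsCompact (toWeakSpace ℝ V '' {x | g x ≤ m}) :=
    isCompact_toWeakSpace_image_setOf_le inclusionInDoubleDual_surjective hwlsc
      (bounded_sublevel m)
  have hcompact' : IsCompact (toWeakSpace ℝ V '' {x | legendre (legendre g) x ≤ m}) :=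
    isCompact_toWeakSpace_image_of_convex inclusionInDoubleDual_surjective (hcoercive m) hclosed
      hconvex
  refine ⟨hclosed, hcoercive m, hconvex, fun x hx => (legendre_legendre_le x).trans hx, ?_, ?_⟩
  · rw [← hull_eq] at hcompact' ⊢
    exact extremePoints_closedConvexHull_subset_of_isCompact_toWeakSpace hcompact hcompact'
  · rw [← closedConvexHull_eq_closure_convexHull]
    exact closedConvexHull_extremePoints_of_isCompact_toWeakSpace hcompact' hconvex

/-- Let `g` be weakly l.s.c., not identically `+∞`, never `-∞`, with proper
coercive biconjugate `g**`. Let `G`, `G**` be the sets of global minimizers of `g`, `g**`.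
Then `G**` is closed, bounded and convex, `G ⊆ G**`, every extreme point of `G**` lies in `G`,
and the closed convex hull of the extreme points of `G**` equals `G**`. -/
theorem statement12 {V : Type*} [NormedAddCommGroup V] [InnerProductSpace ℝ V]
    [CompleteSpace V] [TopologicalSpace.SeparableSpace V]
    (g : V → EReal)
    (hwlsc : LowerSemicontinuous (α := WeakSpace ℝ V) g)
    (hnebot : ∀ x, g x ≠ ⊥) (hproper : ∃ x, g x ≠ ⊤)
    (hss_nebot : ∀ x, legendre (legendre g) x ≠ ⊥)
    (hss_proper : ∃ x, legendre (legendre g) x ≠ ⊤)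
    (hcoercive : ∀ r : ℝ, Bornology.IsBounded {x : V | legendre (legendre g) x ≤ (r : EReal)}) :
    IsClosed {x : V | ∀ y, legendre (legendre g) x ≤ legendre (legendre g) y} ∧
    Bornology.IsBounded {x : V | ∀ y, legendre (legendre g) x ≤ legendre (legendre g) y} ∧
    Convex ℝ {x : V | ∀ y, legendre (legendre g) x ≤ legendre (legendre g) y} ∧
    {x : V | ∀ y, g x ≤ g y} ⊆
      {x : V | ∀ y, legendre (legendre g) x ≤ legendre (legendre g) y} ∧
    Set.extremePoints ℝ {x : V | ∀ y, legendre (legendre g) x ≤ legendre (legendre g) y} ⊆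
      {x : V | ∀ y, g x ≤ g y} ∧
    closure (convexHull ℝ (Set.extremePoints ℝ
        {x : V | ∀ y, legendre (legendre g) x ≤ legendre (legendre g) y})) =
      {x : V | ∀ y, legendre (legendre g) x ≤ legendre (legendre g) y} :=
  statement12_general g hwlsc hnebot hproper hcoercive
end
end

section
/- Let f : V → [0,∞] be a proper lower semicontinuous function on a separable real Hilbert space V, and let 0 < γ < ρ. For y ∈ V let z = prox_{((ρ−γ)/(ργ))·S_γ(f)}(y). Then prox_{S_γ²(f)/ρ}(y) = (ρy − γz)/(ρ−γ); in particular both proximal points exist and are unique. -/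
open scoped InnerProductSpace RealInnerProductSpace ENNReal Topology
open Filter

noncomputable section

/-- The S-transform `S_γ(f)(y) = sup_x ( -f(x) - (γ/2)‖x-y‖² )` for
extended-real-valued functions on a real inner product space. -/
def SgammaE {V : Type*} [NormedAddCommGroup V] [InnerProductSpace ℝ V]
    (γ : ℝ) (f : V → EReal) (y : V) : EReal :=
  ⨆ x : V, (-(f x) - (((γ / 2) * ‖x - y‖ ^ 2 : ℝ) : EReal))

/-- The S-transform of a `[0,∞]`-valued function. -/
def Sgamma {V : Type*} [NormedAddCommGroup V] [InnerProductSpace ℝ V]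
    (γ : ℝ) (f : V → ℝ≥0∞) (y : V) : EReal :=
  SgammaE γ (fun x => (f x : EReal)) y

/-- The twice iterated S-transform `S_γ²(f) = S_γ(S_γ(f))`. -/
def Sgamma2 {V : Type*} [NormedAddCommGroup V] [InnerProductSpace ℝ V]
    (γ : ℝ) (f : V → ℝ≥0∞) : V → EReal :=
  SgammaE γ (Sgamma γ f)

/-- Convexity for extended-real-valued functions. -/
def EConvexOn {V : Type*} [NormedAddCommGroup V] [InnerProductSpace ℝ V]
    (h : V → EReal) : Prop :=
  ∀ x y : V, ∀ a b : ℝ, 0 ≤ a → 0 ≤ b → a + b = 1 →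
    h (a • x + b • y) ≤ (a : EReal) * h x + (b : EReal) * h y

/-- `x` is a proximal point of `g` at `y`, i.e. a minimizer of `w ↦ g(w) + ½‖w-y‖²`. -/
def IsProx {V : Type*} [NormedAddCommGroup V] [InnerProductSpace ℝ V]
    (g : V → EReal) (y x : V) : Prop :=
  ∀ w : V, g x + ((1 / 2 * ‖x - y‖ ^ 2 : ℝ) : EReal) ≤ g w + ((1 / 2 * ‖w - y‖ ^ 2 : ℝ) : EReal)

/-!
The function `S_γ(f) + (γ/2)‖·‖²` is a supremum of affine functions, so `S_γ(f)` is lower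
semicontinuous and weakly convex of modulus `γ`. Since `c = (ρ-γ)/(ργ)` satisfies `cγ = 1 - γ/ρ`,
the objective `c S_γ(f) + ½‖· - y‖²` is strongly convex of modulus `γ/ρ`, hence has a unique
minimizer `z`, around which it grows at least like `(γ/(2ρ))‖· - z‖²`. For
`w = (ρy - γz)/(ρ-γ)`, completing the square gives, up to a constant,
`c S_γ(f) + ½‖· - y‖² = c (S_γ(f) + (γ/2)‖· - w‖²) + (γ/(2ρ))‖· - z‖²`,
so the quadratic growth says precisely that `z` also minimizes `S_γ(f) + (γ/2)‖· - w‖²`. The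
supremum defining `S_γ²(f)(w)` is therefore attained at `z`; comparing `S_γ²(f)(v)` with the term
of `z` in its supremum shows that `S_γ²(f)/ρ + ½‖· - y‖²` grows quadratically around `w`.
-/

theorem add_coe_le_coe_iff {a : EReal} {q r : ℝ} : a + q ≤ r ↔ a ≤ ((r - q : ℝ) : EReal) := by
  rw [EReal.coe_sub, EReal.le_sub_iff_add_le (.inl (EReal.coe_ne_bot q))
    (.inl (EReal.coe_ne_top q))]

theorem sub_coe_le_coe_iff {a : EReal} {q r : ℝ} : a - q ≤ r ↔ a ≤ ((r + q : ℝ) : EReal) := by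
  rw [EReal.coe_add, EReal.sub_le_iff_le_add (.inl (EReal.coe_ne_bot q))
    (.inl (EReal.coe_ne_top q))]

theorem coe_mul_le_coe_iff {a : EReal} {c r : ℝ} (hc : 0 < c) :
    (c : EReal) * a ≤ r ↔ a ≤ ((r / c : ℝ) : EReal) := by
  rw [EReal.coe_div, EReal.le_div_iff_mul_le (EReal.coe_pos.2 hc) (EReal.coe_ne_top c), mul_comm]

theorem coe_mul_eq_top_iff {a : EReal} {c : ℝ} (hc : 0 < c) : (c : EReal) * a = ⊤ ↔ a = ⊤ := by
  simp [EReal.mul_eq_top, hc, hc.not_gt]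

section LowerSemicontinuous

variable {X : Type*} [TopologicalSpace X] {F : X → EReal}

theorem lowerSemicontinuous_add_coe (hF : LowerSemicontinuous F) {q : X → ℝ} (hq : Continuous q) :
    LowerSemicontinuous fun x => F x + (q x : EReal) :=
  hF.add' (continuous_coe_real_ereal.comp hq).lowerSemicontinuous fun x =>
    EReal.continuousAt_add (.inr (EReal.coe_ne_bot (q x))) (.inr (EReal.coe_ne_top (q x)))

theorem lowerSemicontinuous_coe_mul (hF : LowerSemicontinuous F) {c : ℝ} (hc : 0 < c) :
    LowerSemicontinuous fun x => (c : EReal) * F x := by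
  have hc₀ : (c : EReal) ≠ 0 := EReal.coe_ne_zero.2 hc.ne'
  have hcont : Continuous fun a : EReal => (c : EReal) * a :=
    continuous_iff_continuousAt.2 fun a =>
      (EReal.continuousAt_mul (p := (↑c, a)) (.inl hc₀) (.inl hc₀) (.inl (EReal.coe_ne_bot c))
        (.inl (EReal.coe_ne_top c))).comp (continuousAt_const.prodMk continuousAt_id)
  exact hcont.comp_lowerSemicontinuous hF fun _ _ hab =>
    mul_le_mul_of_nonneg_left hab (EReal.coe_nonneg.2 hc.le)

end LowerSemicontinuous

section ProximalPoints

variable {V : Type*} [NormedAddCommGroup V]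

theorem eq_of_add_mul_norm_sub_sq_le {a b : EReal} {k : ℝ} (hk : 0 < k) {x z : V} (htop : a ≠ ⊤)
    (hbot : a ≠ ⊥) (hgrowth : a + ((k * ‖x - z‖ ^ 2 : ℝ) : EReal) ≤ b) (hle : b ≤ a) : x = z := by
  lift a to ℝ using ⟨htop, hbot⟩
  have hreal : a + k * ‖x - z‖ ^ 2 ≤ a := by exact_mod_cast hgrowth.trans hle
  have hsq : ‖x - z‖ ^ 2 ≤ 0 := by nlinarith
  exact sub_eq_zero.1 (norm_eq_zero.1 ((sq_nonpos_iff _).1 hsq))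

variable [InnerProductSpace ℝ V]

theorem norm_sub_affineComb_sq (u x y : V) (t : ℝ) :
    ‖u - ((1 - t) • x + t • y)‖ ^ 2
      = (1 - t) * ‖u - x‖ ^ 2 + t * ‖u - y‖ ^ 2 - t * (1 - t) * ‖x - y‖ ^ 2 := by
  have hcomb : u - ((1 - t) • x + t • y) = (1 - t) • (u - x) + t • (u - y) := by module
  have hdiff : x - y = (u - y) - (u - x) := by abel
  rw [hcomb, hdiff, norm_add_sq_real, norm_sub_sq_real (u - y), norm_smul, norm_smul, mul_pow,
    mul_pow, Real.norm_eq_abs, Real.norm_eq_abs, sq_abs, sq_abs, real_inner_smul_left,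
    real_inner_smul_right, real_inner_comm (u - y)]
  ring

theorem mul_norm_sub_sq_sub_mul_norm_sub_sq {γ ρ : ℝ} (hγρ : γ ≠ ρ) {w y z : V}
    (hw : w = (ρ - γ)⁻¹ • (ρ • y - γ • z)) (x : V) :
    ρ * ‖x - y‖ ^ 2 - γ * ‖x - z‖ ^ 2
      = (ρ - γ) * ‖x - w‖ ^ 2 - ρ * γ / (ρ - γ) * ‖y - z‖ ^ 2 := by
  have hd : ρ - γ ≠ 0 := sub_ne_zero.2 hγρ.symm
  have hcoef : 1 - -γ / (ρ - γ) = ρ / (ρ - γ) := by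
    field_simp
    ring
  have hcomb : w = (1 - -γ / (ρ - γ)) • y + (-γ / (ρ - γ)) • z := by
    rw [hw, hcoef]
    module
  rw [hcomb, norm_sub_affineComb_sq, hcoef]
  field_simp
  ring

theorem exists_forall_le_mul_norm_sub_sq_sub {γ ρ : ℝ} (hγρ : γ < ρ) (y z : V) :
    ∃ r : ℝ, ∀ x, r ≤ ρ * ‖x - y‖ ^ 2 - γ * ‖x - z‖ ^ 2 := by
  refine ⟨-(ρ * γ / (ρ - γ) * ‖y - z‖ ^ 2), fun x => ?_⟩
  rw [mul_norm_sub_sq_sub_mul_norm_sub_sq hγρ.ne rfl x]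
  exact le_add_of_nonneg_left (mul_nonneg (sub_nonneg.2 hγρ.le) (sq_nonneg _))

/-- Strong convexity with modulus `m` of an extended-real-valued function; a negative modulus
expresses weak convexity. The values at the endpoints enter through real upper bounds, so that
no sum of infinities of opposite signs occurs. -/
def EStrongConvex (m : ℝ) (F : V → EReal) : Prop :=
  ∀ ⦃a b : V⦄ ⦃r s : ℝ⦄, F a ≤ r → F b ≤ s → ∀ ⦃t : ℝ⦄, 0 ≤ t → t ≤ 1 →
    F ((1 - t) • a + t • b)
      ≤ (((1 - t) * r + t * s - m / 2 * (t * (1 - t) * ‖a - b‖ ^ 2) : ℝ) : EReal)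

namespace EStrongConvex

variable {m : ℝ} {F : V → EReal}

theorem const_mul (hF : EStrongConvex m F) {c : ℝ} (hc : 0 < c) :
    EStrongConvex (c * m) (fun x => (c : EReal) * F x) := by
  intro a b r s ha hb t ht₀ ht₁
  rw [coe_mul_le_coe_iff hc] at ha hb ⊢
  convert hF ha hb ht₀ ht₁ using 2
  field_simp

theorem add_norm_sub_sq (hF : EStrongConvex m F) (k : ℝ) (y : V) :
    EStrongConvex (m + k) (fun x => F x + ((k / 2 * ‖x - y‖ ^ 2 : ℝ) : EReal)) := by
  intro a b r s ha hb t ht₀ ht₁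
  rw [add_coe_le_coe_iff] at ha hb ⊢
  convert hF ha hb ht₀ ht₁ using 2
  rw [norm_sub_rev _ y, norm_sub_affineComb_sq, norm_sub_rev y a, norm_sub_rev y b]
  ring

theorem add_norm_sub_sq_le_of_forall_le (hF : EStrongConvex m F) {z : V} (hz : ∀ x, F z ≤ F x)
    (x : V) : F z + ((m / 2 * ‖x - z‖ ^ 2 : ℝ) : EReal) ≤ F x := by
  refine EReal.le_of_forall_lt_iff_le.1 fun r hr => ?_
  rcases eq_or_ne (F z) ⊥ with hbot | hbot
  · simp [hbot]
  lift F z to ℝ using ⟨ne_top_of_lt ((hz x).trans_lt hr), hbot⟩ with p hp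
  have hsegment : ∀ᶠ t : ℝ in 𝓝[>] 0, p + m / 2 * ((1 - t) * ‖x - z‖ ^ 2) ≤ r := by
    filter_upwards [Ioc_mem_nhdsGT (zero_lt_one' ℝ)] with t ht
    have hmin := (hz _).trans (hF hp.ge hr.le ht.1.le ht.2)
    rw [EReal.coe_le_coe_iff, norm_sub_rev z x] at hmin
    exact le_of_mul_le_mul_left (by linarith) ht.1
  have hlim : Tendsto (fun t : ℝ => p + m / 2 * ((1 - t) * ‖x - z‖ ^ 2)) (𝓝[>] 0)
      (𝓝 (p + m / 2 * ‖x - z‖ ^ 2)) :=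
    tendsto_nhdsWithin_of_tendsto_nhds (Continuous.tendsto' (by fun_prop) _ _ (by simp))
  exact_mod_cast le_of_tendsto hlim hsegment

theorem norm_sub_sq_le_of_le_add (hF : EStrongConvex m F) {μ ε : ℝ} (hμ : ∀ x, (μ : EReal) ≤ F x)
    {a b : V} (ha : F a ≤ ((μ + ε : ℝ) : EReal)) (hb : F b ≤ ((μ + ε : ℝ) : EReal)) :
    m / 8 * ‖a - b‖ ^ 2 ≤ ε := by
  have hmid := (hμ _).trans (hF ha hb (t := 1 / 2) (by norm_num) (by norm_num))
  rw [EReal.coe_le_coe_iff] at hmid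
  linarith

theorem cauchySeq_of_eventually_le_add (hF : EStrongConvex m F) (hm : 0 < m) {μ : ℝ}
    (hμ : ∀ x, (μ : EReal) ≤ F x) {x : ℕ → V}
    (hx : ∀ ε > 0, ∀ᶠ n in atTop, F (x n) ≤ ((μ + ε : ℝ) : EReal)) : CauchySeq x := by
  refine Metric.cauchySeq_iff.2 fun ε hε => ?_
  obtain ⟨N, hN⟩ := eventually_atTop.1 (hx (m / 8 * (ε / 2) ^ 2) (by positivity))
  refine ⟨N, fun i hi j hj => ?_⟩
  have hsq : ‖x i - x j‖ ^ 2 ≤ (ε / 2) ^ 2 :=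
    le_of_mul_le_mul_left (hF.norm_sub_sq_le_of_le_add hμ (hN i hi) (hN j hj)) (by positivity)
  rw [dist_eq_norm]
  exact (le_of_sq_le_sq hsq (by positivity)).trans_lt (half_lt_self hε)

theorem exists_forall_le [CompleteSpace V] (hF : EStrongConvex m F) (hm : 0 < m)
    (hlsc : LowerSemicontinuous F) (hbdd : ∃ r : ℝ, ∀ x, (r : EReal) ≤ F x)
    (hproper : ∃ x, F x ≠ ⊤) : ∃ z, ∀ x, F z ≤ F x := by
  obtain ⟨μ, hμ⟩ : ∃ μ : ℝ, (μ : EReal) = ⨅ x, F x := by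
    obtain ⟨r, hr⟩ := hbdd
    obtain ⟨a, ha⟩ := hproper
    exact ⟨_, EReal.coe_toReal (ne_top_of_le_ne_top ha (iInf_le F a))
      (ne_bot_of_le_ne_bot (EReal.coe_ne_bot r) (le_iInf hr))⟩
  have hμ_le : ∀ x, (μ : EReal) ≤ F x := fun x => hμ.trans_le (iInf_le F x)
  obtain ⟨u, -, hu, hu_mem⟩ := exists_seq_tendsto_sInf (Set.range_nonempty F) (OrderBot.bddBelow _)
  choose x hx using hu_mem
  have hx_le : ∀ ε > 0, ∀ᶠ n in atTop, F (x n) ≤ ((μ + ε : ℝ) : EReal) := by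
    intro ε hε
    have hlt : sInf (Set.range F) < ((μ + ε : ℝ) : EReal) := by
      rw [sInf_range, ← hμ, EReal.coe_lt_coe_iff]
      exact lt_add_of_pos_right μ hε
    filter_upwards [hu.eventually_lt_const hlt] with n hn
    exact (hx n).trans_le hn.le
  obtain ⟨z, hz⟩ :=
    cauchySeq_tendsto_of_complete (hF.cauchySeq_of_eventually_le_add hm hμ_le hx_le)
  have hz_le : F z ≤ μ := by
    refine EReal.le_of_forall_lt_iff_le.1 fun r hr => ?_
    have hgap : 0 < r - μ := sub_pos.2 (EReal.coe_lt_coe_iff.1 hr)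
    refine (hlsc.isClosed_preimage (r : EReal)).mem_of_tendsto hz ?_
    simpa using hx_le _ hgap
  exact ⟨z, fun v => hz_le.trans (hμ_le v)⟩

theorem existsUnique_forall_le [CompleteSpace V] (hF : EStrongConvex m F) (hm : 0 < m)
    (hlsc : LowerSemicontinuous F) (hbdd : ∃ r : ℝ, ∀ x, (r : EReal) ≤ F x)
    (hproper : ∃ x, F x ≠ ⊤) : ∃! z, ∀ x, F z ≤ F x := by
  obtain ⟨z, hz⟩ := hF.exists_forall_le hm hlsc hbdd hproper
  obtain ⟨r, hr⟩ := hbdd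
  obtain ⟨a, ha⟩ := hproper
  exact ⟨z, hz, fun x hx => eq_of_add_mul_norm_sub_sq_le (half_pos hm)
    (ne_top_of_le_ne_top ha (hz a)) (ne_bot_of_le_ne_bot (EReal.coe_ne_bot r) (hr z))
    (hF.add_norm_sub_sq_le_of_forall_le hz x) (hx z)⟩

theorem existsUnique_isProx [CompleteSpace V] (hF : EStrongConvex m F) (hm : -1 < m)
    (hlsc : LowerSemicontinuous F) {y : V}
    (hbdd : ∃ r : ℝ, ∀ x, (r : EReal) ≤ F x + ((1 / 2 * ‖x - y‖ ^ 2 : ℝ) : EReal))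
    (hproper : ∃ x, F x ≠ ⊤) : ∃! z, IsProx F y z := by
  refine (hF.add_norm_sub_sq 1 y).existsUnique_forall_le (by linarith)
    (lowerSemicontinuous_add_coe hlsc (by fun_prop)) hbdd ?_
  obtain ⟨x, hx⟩ := hproper
  exact ⟨x, EReal.add_ne_top hx (EReal.coe_ne_top _)⟩

end EStrongConvex

namespace IsProx

variable {g : V → EReal} {y z : V}

theorem add_norm_sub_sq_le (hz : IsProx g y z) {m : ℝ} (hg : EStrongConvex m g) (x : V) :
    g z + ((1 / 2 * ‖z - y‖ ^ 2 : ℝ) : EReal) + (((m + 1) / 2 * ‖x - z‖ ^ 2 : ℝ) : EReal)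
      ≤ g x + ((1 / 2 * ‖x - y‖ ^ 2 : ℝ) : EReal) :=
  (hg.add_norm_sub_sq 1 y).add_norm_sub_sq_le_of_forall_le hz x

theorem ne_top (hz : IsProx g y z) (hproper : ∃ x, g x ≠ ⊤) : g z ≠ ⊤ := by
  obtain ⟨x, hx⟩ := hproper
  intro htop
  have hle := hz x
  rw [htop, EReal.top_add_coe, top_le_iff] at hle
  exact EReal.add_ne_top hx (EReal.coe_ne_top _) hle

end IsProx

section STransform

variable (γ : ℝ) (f : V → EReal)

theorem neg_sub_le_SgammaE (x y : V) :
    -(f x) - ((γ / 2 * ‖x - y‖ ^ 2 : ℝ) : EReal) ≤ SgammaE γ f y :=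
  le_iSup (fun x => -(f x) - ((γ / 2 * ‖x - y‖ ^ 2 : ℝ) : EReal)) x

theorem lowerSemicontinuous_SgammaE : LowerSemicontinuous (SgammaE γ f) := by
  refine lowerSemicontinuous_iSup fun u => ?_
  simp only [sub_eq_add_neg, ← EReal.coe_neg]
  exact lowerSemicontinuous_add_coe lowerSemicontinuous_const (by fun_prop)

variable {γ f} in
theorem SgammaE_le_coe_iff {r : ℝ} {y : V} :
    SgammaE γ f y ≤ r ↔ ∀ x, -(f x) ≤ ((r + γ / 2 * ‖x - y‖ ^ 2 : ℝ) : EReal) := by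
  simp only [SgammaE, iSup_le_iff, sub_coe_le_coe_iff]

theorem eStrongConvex_SgammaE : EStrongConvex (-γ) (SgammaE γ f) := by
  intro a b r s ha hb t ht₀ ht₁
  rw [SgammaE_le_coe_iff] at ha hb ⊢
  intro u
  refine (le_min (ha u) (hb u)).trans ?_
  rw [← EReal.coe_strictMono.monotone.map_min, EReal.coe_le_coe_iff, norm_sub_affineComb_sq]
  have hmin := Convex.min_le_combo (r + γ / 2 * ‖u - a‖ ^ 2) (s + γ / 2 * ‖u - b‖ ^ 2)
    (sub_nonneg.2 ht₁) ht₀ (sub_add_cancel 1 t)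
  simp only [smul_eq_mul] at hmin
  linarith

variable {f}

theorem exists_forall_le_SgammaE (hproper : ∃ x, f x ≠ ⊤) :
    ∃ (r : ℝ) (u : V), ∀ x, ((r - γ / 2 * ‖x - u‖ ^ 2 : ℝ) : EReal) ≤ SgammaE γ f x := by
  obtain ⟨u, hu⟩ := hproper
  obtain ⟨r, hr, -⟩ := EReal.exists_between_coe_real (lt_top_iff_ne_top.2 hu)
  refine ⟨-r, u, fun x => le_trans ?_ (neg_sub_le_SgammaE γ f u x)⟩
  rw [norm_sub_rev, EReal.coe_sub, EReal.coe_neg]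
  exact EReal.sub_le_sub (EReal.neg_le_neg_iff.2 hr.le) le_rfl

theorem SgammaE_ne_bot (hproper : ∃ x, f x ≠ ⊤) (x : V) : SgammaE γ f x ≠ ⊥ := by
  obtain ⟨r, u, hr⟩ := exists_forall_le_SgammaE γ hproper
  exact ne_bot_of_le_ne_bot (EReal.coe_ne_bot _) (hr x)

variable {γ}

theorem SgammaE_nonpos (hγ : 0 ≤ γ) (hf : ∀ x, 0 ≤ f x) (y : V) : SgammaE γ f y ≤ 0 := by
  refine SgammaE_le_coe_iff.2 fun x => (EReal.neg_le_zero.2 (hf x)).trans ?_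
  exact EReal.coe_nonneg.2 (by positivity)

theorem exists_forall_le_mul_SgammaE_add {c : ℝ} (hc : 0 < c) (hcγ : c * γ < 1)
    (hproper : ∃ x, f x ≠ ⊤) (y : V) :
    ∃ r : ℝ, ∀ x, (r : EReal) ≤ c * SgammaE γ f x + ((1 / 2 * ‖x - y‖ ^ 2 : ℝ) : EReal) := by
  obtain ⟨r, u, hr⟩ := exists_forall_le_SgammaE γ hproper
  obtain ⟨q, hq⟩ := exists_forall_le_mul_norm_sub_sq_sub hcγ y u
  refine ⟨c * r + q / 2, fun x => ?_⟩
  calc ((c * r + q / 2 : ℝ) : EReal)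
      ≤ ((c * (r - γ / 2 * ‖x - u‖ ^ 2) + 1 / 2 * ‖x - y‖ ^ 2 : ℝ) : EReal) :=
        EReal.coe_le_coe_iff.2 (by linarith [hq x])
    _ ≤ c * SgammaE γ f x + ((1 / 2 * ‖x - y‖ ^ 2 : ℝ) : EReal) := by
        rw [EReal.coe_add, EReal.coe_mul]
        gcongr
        exact hr x

theorem existsUnique_isProx_mul_SgammaE [CompleteSpace V] {c : ℝ} (hc : 0 < c) (hcγ : c * γ < 1)
    (hproper : ∃ x, f x ≠ ⊤) (hfinite : ∃ x, SgammaE γ f x ≠ ⊤) (y : V) :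
    ∃! z, IsProx (fun x => (c : EReal) * SgammaE γ f x) y z :=
  ((eStrongConvex_SgammaE γ f).const_mul hc).existsUnique_isProx (by linarith)
    (lowerSemicontinuous_coe_mul (lowerSemicontinuous_SgammaE γ f) hc)
    (exists_forall_le_mul_SgammaE_add hc hcγ hproper y)
    (hfinite.imp fun _ => mt (coe_mul_eq_top_iff hc).1)

end STransform

section Duality

variable {γ ρ : ℝ} {s : V → EReal} {w y z : V}

theorem SgammaE_eq_of_isProx (hγ : 0 < γ) (hγρ : γ < ρ) (hs : EStrongConvex (-γ) s)
    {σ : ℝ} (hσ : s z = σ)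
    (hz : IsProx (fun x => (((ρ - γ) / (ρ * γ) : ℝ) : EReal) * s x) y z)
    (hw : w = (ρ - γ)⁻¹ • (ρ • y - γ • z)) :
    SgammaE γ s w = ((-σ - γ / 2 * ‖z - w‖ ^ 2 : ℝ) : EReal) := by
  have hρ : 0 < ρ := hγ.trans hγρ
  set c : ℝ := (ρ - γ) / (ρ * γ)
  have hc : 0 < c := div_pos (sub_pos.2 hγρ) (mul_pos hρ hγ)
  refine le_antisymm (SgammaE_le_coe_iff.2 fun x => ?_) ?_
  · have hgrowth := hz.add_norm_sub_sq_le (hs.const_mul hc) x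
    simp only [hσ] at hgrowth
    norm_cast at hgrowth
    rcases eq_or_ne (s x) ⊤ with htop | htop
    · simp [htop]
    rcases eq_or_ne (s x) ⊥ with hbot | hbot
    · rw [hbot, EReal.coe_mul_bot_of_pos hc, EReal.bot_add, le_bot_iff] at hgrowth
      exact absurd hgrowth (EReal.coe_ne_bot _)
    lift s x to ℝ using ⟨htop, hbot⟩ with τ
    norm_cast at hgrowth ⊢
    have hsquares : 1 / 2 * ‖x - y‖ ^ 2 - 1 / 2 * ‖z - y‖ ^ 2 - (c * -γ + 1) / 2 * ‖x - z‖ ^ 2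
        = c * (γ / 2 * ‖x - w‖ ^ 2 - γ / 2 * ‖z - w‖ ^ 2) := by
      have hx_sq := mul_norm_sub_sq_sub_mul_norm_sub_sq hγρ.ne hw x
      have hz_sq := mul_norm_sub_sq_sub_mul_norm_sub_sq hγρ.ne hw z
      rw [sub_self, norm_zero] at hz_sq
      simp only [c]
      field_simp
      linear_combination hx_sq - hz_sq
    have hmin : σ - τ ≤ γ / 2 * ‖x - w‖ ^ 2 - γ / 2 * ‖z - w‖ ^ 2 :=
      le_of_mul_le_mul_left (by linarith) hc
    linarith
  · simpa [hσ] using neg_sub_le_SgammaE γ s z w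

theorem inv_mul_SgammaE_add_norm_sub_sq_le_of_isProx (hγ : 0 < γ) (hγρ : γ < ρ)
    (hs : EStrongConvex (-γ) s) {σ : ℝ} (hσ : s z = σ)
    (hz : IsProx (fun x => (((ρ - γ) / (ρ * γ) : ℝ) : EReal) * s x) y z)
    (hw : w = (ρ - γ)⁻¹ • (ρ • y - γ • z)) (v : V) :
    ((ρ⁻¹ : ℝ) : EReal) * SgammaE γ s w + ((1 / 2 * ‖w - y‖ ^ 2 : ℝ) : EReal)
        + (((ρ - γ) / (2 * ρ) * ‖v - w‖ ^ 2 : ℝ) : EReal)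
      ≤ ((ρ⁻¹ : ℝ) : EReal) * SgammaE γ s v + ((1 / 2 * ‖v - y‖ ^ 2 : ℝ) : EReal) := by
  have hρ : 0 < ρ := hγ.trans hγρ
  have hminorant : ((-σ - γ / 2 * ‖z - v‖ ^ 2 : ℝ) : EReal) ≤ SgammaE γ s v := by
    simpa [hσ] using neg_sub_le_SgammaE γ s z v
  have hsquares : ρ⁻¹ * (-σ - γ / 2 * ‖z - w‖ ^ 2) + 1 / 2 * ‖w - y‖ ^ 2
        + (ρ - γ) / (2 * ρ) * ‖v - w‖ ^ 2
      = ρ⁻¹ * (-σ - γ / 2 * ‖z - v‖ ^ 2) + 1 / 2 * ‖v - y‖ ^ 2 := by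
    have hv_sq := mul_norm_sub_sq_sub_mul_norm_sub_sq hγρ.ne hw v
    have hw_sq := mul_norm_sub_sq_sub_mul_norm_sub_sq hγρ.ne hw w
    rw [sub_self, norm_zero] at hw_sq
    rw [norm_sub_rev z w, norm_sub_rev z v]
    field_simp
    linear_combination hw_sq - hv_sq
  rw [SgammaE_eq_of_isProx hγ hγρ hs hσ hz hw, ← EReal.coe_mul, ← EReal.coe_add,
    ← EReal.coe_add, hsquares, EReal.coe_add, EReal.coe_mul]
  gcongr

theorem isProx_inv_mul_SgammaE_iff (hγ : 0 < γ) (hγρ : γ < ρ) (hs : EStrongConvex (-γ) s)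
    (htop : s z ≠ ⊤) (hbot : s z ≠ ⊥)
    (hz : IsProx (fun x => (((ρ - γ) / (ρ * γ) : ℝ) : EReal) * s x) y z)
    (hw : w = (ρ - γ)⁻¹ • (ρ • y - γ • z)) {v : V} :
    IsProx (fun x => ((ρ⁻¹ : ℝ) : EReal) * SgammaE γ s x) y v ↔ v = w := by
  have hcoef : 0 < (ρ - γ) / (2 * ρ) :=
    div_pos (sub_pos.2 hγρ) (mul_pos two_pos (hγ.trans hγρ))
  have hσ : s z = (s z).toReal := (EReal.coe_toReal htop hbot).symm
  have hgrowth := inv_mul_SgammaE_add_norm_sub_sq_le_of_isProx hγ hγρ hs hσ hz hw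
  constructor
  · intro hv
    have hle := hv w
    have hgrowth_v := hgrowth v
    simp only [SgammaE_eq_of_isProx hγ hγρ hs hσ hz hw, ← EReal.coe_mul, ← EReal.coe_add]
      at hle hgrowth_v
    exact eq_of_add_mul_norm_sub_sq_le hcoef (EReal.coe_ne_top _) (EReal.coe_ne_bot _)
      (by exact_mod_cast hgrowth_v) hle
  · rintro rfl x
    exact (le_add_of_nonneg_right (EReal.coe_nonneg.2 (by positivity))).trans (hgrowth x)

end Duality

theorem statement14_general [CompleteSpace V] (f : V → EReal) (hproper : ∃ x, f x ≠ ⊤)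
    (γ ρ : ℝ) (hγ : 0 < γ) (hγρ : γ < ρ) (hfinite : ∃ x, SgammaE γ f x ≠ ⊤) (y : V) :
    (∃! z : V, IsProx (fun x => (((ρ - γ) / (ρ * γ) : ℝ) : EReal) * SgammaE γ f x) y z) ∧
    (∃! w : V, IsProx (fun x => ((ρ⁻¹ : ℝ) : EReal) * SgammaE γ (SgammaE γ f) x) y w) ∧
    (∀ z : V, IsProx (fun x => (((ρ - γ) / (ρ * γ) : ℝ) : EReal) * SgammaE γ f x) y z →
      IsProx (fun x => ((ρ⁻¹ : ℝ) : EReal) * SgammaE γ (SgammaE γ f) x) y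
        ((ρ - γ)⁻¹ • (ρ • y - γ • z))) := by
  have hρ : 0 < ρ := hγ.trans hγρ
  have hc : 0 < (ρ - γ) / (ρ * γ) := div_pos (sub_pos.2 hγρ) (mul_pos hρ hγ)
  have hcγ : (ρ - γ) / (ρ * γ) * γ < 1 := by
    rw [div_mul_eq_mul_div, mul_div_mul_right _ _ hγ.ne', div_lt_one hρ]
    exact sub_lt_self ρ hγ
  have hdual : ∀ z, IsProx (fun x => (((ρ - γ) / (ρ * γ) : ℝ) : EReal) * SgammaE γ f x) y z →
      ∀ v, IsProx (fun x => ((ρ⁻¹ : ℝ) : EReal) * SgammaE γ (SgammaE γ f) x) y v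
        ↔ v = (ρ - γ)⁻¹ • (ρ • y - γ • z) := fun z hz v =>
    isProx_inv_mul_SgammaE_iff hγ hγρ (eStrongConvex_SgammaE γ f)
      (mt (coe_mul_eq_top_iff hc).2 (hz.ne_top (hfinite.imp fun _ => mt (coe_mul_eq_top_iff hc).1)))
      (SgammaE_ne_bot γ hproper z) hz rfl
  have hexists := existsUnique_isProx_mul_SgammaE hc hcγ hproper hfinite y
  refine ⟨hexists, ?_, fun z hz => (hdual z hz _).2 rfl⟩
  obtain ⟨z, hz, -⟩ := hexists
  exact ⟨_, (hdual z hz _).2 rfl, fun v hv => (hdual z hz v).1 hv⟩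

end ProximalPoints

/-- For `0 < γ < ρ` and proper l.s.c. `f : V → [0,∞]`, both proximal points
exist and are unique, and if `z = prox_{((ρ-γ)/(ργ))·S_γ(f)}(y)` then
`prox_{S_γ²(f)/ρ}(y) = (ρy - γz)/(ρ-γ)`. -/
theorem statement14 {V : Type*} [NormedAddCommGroup V] [InnerProductSpace ℝ V]
    [CompleteSpace V] [TopologicalSpace.SeparableSpace V]
    (f : V → ℝ≥0∞) (hlsc : LowerSemicontinuous f) (hproper : ∃ x, f x ≠ ∞)
    (γ ρ : ℝ) (hγ : 0 < γ) (hγρ : γ < ρ) (y : V) :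
    (∃! z : V, IsProx (fun x => (((ρ - γ) / (ρ * γ) : ℝ) : EReal) * Sgamma γ f x) y z) ∧
    (∃! w : V, IsProx (fun x => ((ρ⁻¹ : ℝ) : EReal) * Sgamma2 γ f x) y w) ∧
    (∀ z : V, IsProx (fun x => (((ρ - γ) / (ρ * γ) : ℝ) : EReal) * Sgamma γ f x) y z →
      IsProx (fun x => ((ρ⁻¹ : ℝ) : EReal) * Sgamma2 γ f x) y
        ((ρ - γ)⁻¹ • (ρ • y - γ • z))) :=
  have hnonpos : SgammaE γ (fun x => (f x : EReal)) 0 ≤ 0 :=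
    SgammaE_nonpos hγ.le (fun x => EReal.coe_ennreal_nonneg (f x)) 0
  statement14_general (fun x => f x) (by simpa using hproper) γ ρ hγ hγρ
    ⟨0, ne_top_of_le_ne_top EReal.zero_ne_top hnonpos⟩ y
end
end

section
/- Let f : V → [0,∞], let A : V → W be a bounded linear operator between separable real Hilbert spaces, let d ∈ W and γ > 0, and define 𝒥(x) = f(x) + ½‖Ax−d‖²_W and 𝒥_γ(x) = S_γ²(f)(x) + ½‖Ax−d‖²_W. Then: (i) if ⟨A*Ax,x⟩ ≥ γ‖x‖² for all x ∈ V, then 𝒥_γ is convex and 𝒥_γ ≤ CE(𝒥) pointwise, where CE(𝒥) is the lower semicontinuous convex envelope of 𝒥; (ii) if there is ε > 0 with ⟨A*Ax,x⟩ ≥ (γ+ε)‖x‖² for all x ∈ V (and f is proper), then 𝒥_γ is strongly convex and has a unique global minimizer; (iii) any global minimizer x̂ of 𝒥_γ satisfying f(x̂) = S_γ²(f)(x̂) is a global minimizer of 𝒥. -/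
open scoped InnerProductSpace RealInnerProductSpace ENNReal Topology
open Filter

noncomputable section

/-- The lower semicontinuous convex envelope of `g`: the (pointwise) supremum of all l.s.c.
convex functions below `g`, which is the largest such function. -/
def lscConvexEnvelope {V : Type*} [NormedAddCommGroup V] [InnerProductSpace ℝ V]
    (g : V → EReal) (x : V) : EReal :=
  ⨆ h : {h : V → EReal // LowerSemicontinuous h ∧ EConvexOn h ∧ ∀ x, h x ≤ g x}, h.1 x

/-!
Adding the quadratic inside the supremum gives `S_γ(g)(x) + ½‖Ax-d‖² = sup_y (-g(y) + q_y(x))` with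
`q_y(x) = ½‖Ax-d‖² - (γ/2)‖y-x‖²`. Every `q_y` has Hessian `A*A - γI`, so `A*A ≥ (γ+β)I` makes each
of them `β`-strongly convex, and this passes to the supremum. With `g = S_γ(f)`, the inequality
`S_γ²(f) ≤ f` yields the bound by the convex envelope and the transfer of minimizers. For `β > 0`,
strong convexity forces the minimizing filter to be Cauchy; lower semicontinuity makes its limit a
minimizer.
-/

section Convexity

variable {V : Type*} [NormedAddCommGroup V] [InnerProductSpace ℝ V]

/-- `m`-strong convexity of an extended-real-valued function: the analogue of `StrongConvexOn`, with
the quadratic `m / 2 * ‖x‖ ^ 2` subtracted as in `strongConvexOn_iff_convex`. As there, the modulus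
`m` may be any real number. -/
def EStrongConvexOn (m : ℝ) (F : V → EReal) : Prop :=
  EConvexOn fun x => F x - ((m / 2 * ‖x‖ ^ 2 : ℝ) : EReal)

lemma eStrongConvexOn_zero {F : V → EReal} : EStrongConvexOn 0 F ↔ EConvexOn F := by
  simp [EStrongConvexOn]

lemma ereal_iSup_add_coe {ι : Sort*} (g : ι → EReal) (r : ℝ) :
    (⨆ i, g i) + (r : EReal) = ⨆ i, (g i + (r : EReal)) :=
  GaloisConnection.l_iSup (l := (· + (r : EReal))) (u := (· - (r : EReal))) fun _ _ =>
    (EReal.le_sub_iff_add_le (.inl (EReal.coe_ne_bot r)) (.inl (EReal.coe_ne_top r))).symm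

lemma EConvexOn.iSup {ι : Sort*} {F : ι → V → EReal} (hF : ∀ i, EConvexOn (F i)) :
    EConvexOn fun x => ⨆ i, F i x := by
  intro x y a b ha hb hab
  refine iSup_le fun i => (hF i x y a b ha hb hab).trans (add_le_add ?_ ?_)
  · exact mul_le_mul_of_nonneg_left (le_iSup (F · x) i) (EReal.coe_nonneg.2 ha)
  · exact mul_le_mul_of_nonneg_left (le_iSup (F · y) i) (EReal.coe_nonneg.2 hb)

lemma EConvexOn.const_add_coe {q : V → ℝ} (hq : ConvexOn ℝ Set.univ q) (c : EReal) :
    EConvexOn fun x => c + (q x : EReal) := by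
  intro x y a b ha hb hab
  induction c using EReal.rec with
  | bot => simp
  | top =>
    rcases ha.eq_or_lt with rfl | ha
    · obtain rfl : b = 1 := by linarith
      simp
    · rcases hb.eq_or_lt with rfl | hb
      · simp [EReal.coe_mul_top_of_pos ha]
      · simp [EReal.coe_mul_top_of_pos ha, EReal.coe_mul_top_of_pos hb]
  | coe r =>
    have hconv : q (a • x + b • y) ≤ a * q x + b * q y :=
      hq.2 (Set.mem_univ x) (Set.mem_univ y) ha hb hab
    have hr : r = a * r + b * r := by rw [← add_mul, hab, one_mul]
    beta_reduce
    norm_cast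
    linarith

lemma EStrongConvexOn.iSup_const_add_coe {ι : Sort*} {m : ℝ} {q : ι → V → ℝ}
    (hq : ∀ i, StrongConvexOn Set.univ m (q i)) (c : ι → EReal) :
    EStrongConvexOn m fun x => ⨆ i, (c i + (q i x : EReal)) := by
  have hsup := EConvexOn.iSup fun i =>
    EConvexOn.const_add_coe (strongConvexOn_iff_convex.1 (hq i)) (c i)
  simpa only [EStrongConvexOn, sub_eq_add_neg, ← EReal.coe_neg, ereal_iSup_add_coe, add_assoc,
    ← EReal.coe_add] using hsup

lemma norm_convexCombination_sq (x y : V) {a b : ℝ} (hab : a + b = 1) :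
    ‖a • x + b • y‖ ^ 2 = a * ‖x‖ ^ 2 + b * ‖y‖ ^ 2 - a * b * ‖x - y‖ ^ 2 := by
  obtain rfl : b = 1 - a := by linarith
  rw [norm_add_sq_real, norm_sub_sq_real, norm_smul, norm_smul, mul_pow, mul_pow,
    real_inner_smul_left, real_inner_smul_right, Real.norm_eq_abs, Real.norm_eq_abs, sq_abs, sq_abs]
  ring

lemma strongConvexOn_half_norm_map_sub_sq_sub {W : Type*} [NormedAddCommGroup W]
    [InnerProductSpace ℝ W] {A : V →ₗ[ℝ] W} {γ m : ℝ}
    (hA : ∀ x, (γ + m) * ‖x‖ ^ 2 ≤ ‖A x‖ ^ 2) (d : W) (y : V) :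
    StrongConvexOn Set.univ m fun x => 1 / 2 * ‖A x - d‖ ^ 2 - γ / 2 * ‖y - x‖ ^ 2 := by
  refine ⟨convex_univ, fun x _ z _ a b ha hb hab => ?_⟩
  have hd : A (a • x + b • z) - d = a • (A x - d) + b • (A z - d) := by
    obtain rfl : b = 1 - a := by linarith
    simp only [map_add, map_smul]
    module
  have hy : y - (a • x + b • z) = a • (y - x) + b • (y - z) := by
    obtain rfl : b = 1 - a := by linarith
    module
  have hAxz : a * b * ((γ + m) * ‖x - z‖ ^ 2) ≤ a * b * ‖A x - A z‖ ^ 2 := by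
    simpa only [map_sub] using mul_le_mul_of_nonneg_left (hA (x - z)) (mul_nonneg ha hb)
  simp only [smul_eq_mul]
  rw [hd, hy, norm_convexCombination_sq _ _ hab, norm_convexCombination_sq _ _ hab,
    sub_sub_sub_cancel_right, sub_sub_sub_cancel_left, norm_sub_rev z x]
  linarith

lemma le_lscConvexEnvelope {h g : V → EReal} (hlsc : LowerSemicontinuous h) (hconv : EConvexOn h)
    (hle : h ≤ g) : h ≤ lscConvexEnvelope g :=
  fun x => le_iSup
    (fun k : {k : V → EReal // LowerSemicontinuous k ∧ EConvexOn k ∧ ∀ x, k x ≤ g x} => k.1 x)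
    ⟨h, hlsc, hconv, hle⟩

end Convexity

section Minimization

variable {V : Type*} [NormedAddCommGroup V] [InnerProductSpace ℝ V] {F : V → EReal} {β m : ℝ}

lemma EStrongConvexOn.le_sub_norm_sub_sq (hF : EStrongConvexOn β F) {x y : V} {s t : ℝ}
    (hx : F x ≤ s) (hy : F y ≤ t) {a b : ℝ} (ha : 0 ≤ a) (hb : 0 ≤ b) (hab : a + b = 1) :
    F (a • x + b • y) ≤ (a * s + b * t - a * b * (β / 2 * ‖x - y‖ ^ 2) : ℝ) := by
  have hconv := (hF x y a b ha hb hab).trans (add_le_add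
    (mul_le_mul_of_nonneg_left (EReal.sub_le_sub hx le_rfl) (EReal.coe_nonneg.2 ha))
    (mul_le_mul_of_nonneg_left (EReal.sub_le_sub hy le_rfl) (EReal.coe_nonneg.2 hb)))
  rw [EReal.sub_le_iff_le_add (.inl (EReal.coe_ne_bot _)) (.inl (EReal.coe_ne_top _))] at hconv
  refine hconv.trans_eq ?_
  rw [norm_convexCombination_sq x y hab]
  norm_cast
  ring

lemma EStrongConvexOn.norm_sub_sq_le (hF : EStrongConvexOn β F) (hm : ∀ z, (m : EReal) ≤ F z)
    {x y : V} {δ : ℝ} (hx : F x ≤ (m + δ : ℝ)) (hy : F y ≤ (m + δ : ℝ)) :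
    β / 8 * ‖x - y‖ ^ 2 ≤ δ := by
  have hmid := (hm _).trans <|
    hF.le_sub_norm_sub_sq hx hy (a := 1 / 2) (b := 1 / 2) (by norm_num) (by norm_num) (by norm_num)
  rw [EReal.coe_le_coe_iff] at hmid
  linarith

lemma EStrongConvexOn.cauchy_of_tendsto (hF : EStrongConvexOn β F) (hβ : 0 < β)
    (hm : ∀ z, (m : EReal) ≤ F z) {l : Filter V} [l.NeBot] (hl : Tendsto F l (𝓝 m)) :
    Cauchy l := by
  refine Metric.cauchy_iff.2 ⟨‹_›, fun ε hε => ?_⟩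
  have hδ : 0 < β / 8 * (ε / 2) ^ 2 := by positivity
  have hlt : (m : EReal) < (m + β / 8 * (ε / 2) ^ 2 : ℝ) :=
    EReal.coe_lt_coe_iff.2 (lt_add_of_pos_right m hδ)
  refine ⟨_, hl.eventually_lt_const hlt, fun x hx y hy => ?_⟩
  have hle : ‖x - y‖ ^ 2 ≤ (ε / 2) ^ 2 :=
    le_of_mul_le_mul_left (hF.norm_sub_sq_le hm (le_of_lt hx) (le_of_lt hy)) (by positivity)
  rw [dist_eq_norm]
  linarith [(sq_le_sq₀ (norm_nonneg _) (by positivity)).1 hle]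

theorem EStrongConvexOn.existsUnique_forall_le [CompleteSpace V] (hF : EStrongConvexOn β F)
    (hβ : 0 < β) (hlsc : LowerSemicontinuous F) (hbdd : ∃ c : ℝ, ∀ x, (c : EReal) ≤ F x)
    (hproper : ∃ x, F x ≠ ⊤) : ∃! x, ∀ y, F x ≤ F y := by
  obtain ⟨c, hc⟩ := hbdd
  obtain ⟨x₀, hx₀⟩ := hproper
  obtain ⟨m, hglb⟩ : ∃ m : ℝ, IsGLB (Set.range F) m := by
    refine ⟨(⨅ x, F x).toReal, ?_⟩
    rw [EReal.coe_toReal (ne_top_of_le_ne_top hx₀ (iInf_le F x₀))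
      (ne_bot_of_le_ne_bot (EReal.coe_ne_bot c) (le_iInf hc))]
    exact isGLB_iInf
  have hm : ∀ x, (m : EReal) ≤ F x := Set.forall_mem_range.1 hglb.1
  have hl : (comap F (𝓝 (m : EReal))).NeBot :=
    comap_neBot fun t ht => (mem_closure_iff_nhds.1 (hglb.mem_closure ⟨_, x₀, rfl⟩) t ht).elim
      fun _ ⟨hzt, x, hx⟩ => ⟨x, hx ▸ hzt⟩
  obtain ⟨x, hx⟩ := CompleteSpace.complete (hF.cauchy_of_tendsto hβ hm tendsto_comap)
  have hxm : F x ≤ m := calc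
    F x ≤ liminf F (𝓝 x) := lowerSemicontinuous_iff_le_liminf.1 hlsc x
    _ ≤ liminf F (comap F (𝓝 (m : EReal))) := liminf_le_liminf_of_le hx
    _ = m := tendsto_comap.liminf_eq
  refine ⟨x, fun y => hxm.trans (hm y), fun z hz => ?_⟩
  have hzm : F z ≤ m := hglb.2 (Set.forall_mem_range.2 hz)
  have hzx : β / 8 * ‖z - x‖ ^ 2 ≤ 0 :=
    hF.norm_sub_sq_le hm (by simpa using hzm) (by simpa using hxm)
  have hnorm : ‖z - x‖ ^ 2 ≤ 0 := by
    simpa using le_of_mul_le_mul_left (hzx.trans_eq (mul_zero (β / 8)).symm) (by positivity)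
  simpa [sub_eq_zero] using hnorm.antisymm (sq_nonneg _)

end Minimization

section STransform

variable {V : Type*} [NormedAddCommGroup V] [InnerProductSpace ℝ V]

lemma neg_le_SgammaE (γ : ℝ) (g : V → EReal) (x : V) : -(g x) ≤ SgammaE γ g x := by
  refine le_trans ?_ (le_iSup (fun y => -(g y) - ((γ / 2 * ‖y - x‖ ^ 2 : ℝ) : EReal)) x)
  simp

lemma SgammaE_le_neg {γ : ℝ} (hγ : 0 ≤ γ) {f : V → EReal} {c : EReal} (hf : ∀ x, c ≤ f x)
    (y : V) : SgammaE γ f y ≤ -c := by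
  refine iSup_le fun x => ?_
  have hquad : (0 : EReal) ≤ ((γ / 2 * ‖x - y‖ ^ 2 : ℝ) : EReal) :=
    EReal.coe_nonneg.2 (by positivity)
  simpa using EReal.sub_le_sub (EReal.neg_le_neg_iff.2 (hf x)) hquad

lemma le_SgammaE_SgammaE {γ : ℝ} (hγ : 0 ≤ γ) {f : V → EReal} {c : EReal} (hf : ∀ x, c ≤ f x)
    (x : V) : c ≤ SgammaE γ (SgammaE γ f) x :=
  (EReal.le_neg_of_le_neg (SgammaE_le_neg hγ hf x)).trans (neg_le_SgammaE γ _ x)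

lemma SgammaE_SgammaE_le (γ : ℝ) (f : V → EReal) (x : V) : SgammaE γ (SgammaE γ f) x ≤ f x := by
  refine iSup_le fun y => ?_
  have hy : -(f x) - ((γ / 2 * ‖x - y‖ ^ 2 : ℝ) : EReal) ≤ SgammaE γ f y :=
    le_iSup (fun z => -(f z) - ((γ / 2 * ‖z - y‖ ^ 2 : ℝ) : EReal)) x
  rwa [EReal.sub_le_iff_le_add (.inl (EReal.coe_ne_bot _)) (.inl (EReal.coe_ne_top _)),
    EReal.neg_le, EReal.neg_add (.inr (EReal.coe_ne_top _)) (.inr (EReal.coe_ne_bot _)),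
    norm_sub_rev y x]

lemma SgammaE_add_coe (γ : ℝ) (g : V → EReal) (x : V) (r : ℝ) :
    SgammaE γ g x + (r : EReal) =
      ⨆ y, (-(g y) + ((r - γ / 2 * ‖y - x‖ ^ 2 : ℝ) : EReal)) := by
  rw [SgammaE, ereal_iSup_add_coe]
  refine iSup_congr fun y => ?_
  rw [sub_eq_add_neg, ← EReal.coe_neg, add_assoc, ← EReal.coe_add, neg_add_eq_sub]

lemma lowerSemicontinuous_SgammaE_s15 (γ : ℝ) (g : V → EReal) :
    LowerSemicontinuous (SgammaE γ g) := by
  refine lowerSemicontinuous_iSup fun y => Continuous.lowerSemicontinuous ?_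
  have hquad : Continuous fun x => ((-(γ / 2 * ‖y - x‖ ^ 2) : ℝ) : EReal) :=
    continuous_coe_real_ereal.comp (by fun_prop)
  refine continuous_iff_continuousAt.2 fun x => ?_
  exact (EReal.continuousAt_add (.inr (EReal.coe_ne_bot _)) (.inr (EReal.coe_ne_top _))).comp₂
    continuousAt_const hquad.continuousAt

end STransform

section RegularizedLeastSquares

variable {V W : Type*} [NormedAddCommGroup V] [InnerProductSpace ℝ V]
  [NormedAddCommGroup W] [InnerProductSpace ℝ W]

/-- The regularized least-squares functional `x ↦ f(x) + ½‖Ax-d‖²`: this is `𝒥` for the penalty `f`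
and `𝒥_γ` for the penalty `S_γ²(f)`. -/
def regularizedLeastSquares (f : V → EReal) (A : V →L[ℝ] W) (d : W) (x : V) : EReal :=
  f x + ((1 / 2 * ‖A x - d‖ ^ 2 : ℝ) : EReal)

lemma regularizedLeastSquares_mono {f g : V → EReal} (hfg : f ≤ g) (A : V →L[ℝ] W) (d : W) :
    regularizedLeastSquares f A d ≤ regularizedLeastSquares g A d :=
  fun x => add_le_add_left (hfg x) _

lemma le_regularizedLeastSquares (f : V → EReal) (A : V →L[ℝ] W) (d : W) :
    f ≤ regularizedLeastSquares f A d :=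
  fun _ => le_add_of_nonneg_right (EReal.coe_nonneg.2 (by positivity))

lemma eStrongConvexOn_regularizedLeastSquares_SgammaE {A : V →L[ℝ] W} {γ m : ℝ}
    (hA : ∀ x, (γ + m) * ‖x‖ ^ 2 ≤ ‖A x‖ ^ 2) (g : V → EReal) (d : W) :
    EStrongConvexOn m (regularizedLeastSquares (SgammaE γ g) A d) := by
  have hsup : regularizedLeastSquares (SgammaE γ g) A d = fun x =>
      ⨆ y, (-(g y) + ((1 / 2 * ‖A x - d‖ ^ 2 - γ / 2 * ‖y - x‖ ^ 2 : ℝ) : EReal)) :=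
    funext fun x => SgammaE_add_coe γ g x _
  rw [hsup]
  exact EStrongConvexOn.iSup_const_add_coe
    (strongConvexOn_half_norm_map_sub_sq_sub (A := A.toLinearMap) hA d) _

lemma lowerSemicontinuous_regularizedLeastSquares {f : V → EReal} (hf : LowerSemicontinuous f)
    (A : V →L[ℝ] W) (d : W) : LowerSemicontinuous (regularizedLeastSquares f A d) := by
  have hquad : Continuous fun x => ((1 / 2 * ‖A x - d‖ ^ 2 : ℝ) : EReal) :=
    continuous_coe_real_ereal.comp (by fun_prop)
  exact hf.add' hquad.lowerSemicontinuous fun x =>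
    EReal.continuousAt_add (.inr (EReal.coe_ne_bot _)) (.inr (EReal.coe_ne_top _))

theorem statement15_general [CompleteSpace V] (f : V → EReal) (A : V →L[ℝ] W) (d : W) {γ : ℝ}
    (hγ : 0 ≤ γ) :
    let J := regularizedLeastSquares f A d
    let Jγ := regularizedLeastSquares (SgammaE γ (SgammaE γ f)) A d
    ((∀ x, γ * ‖x‖ ^ 2 ≤ ‖A x‖ ^ 2) → EConvexOn Jγ ∧ ∀ x, Jγ x ≤ lscConvexEnvelope J x) ∧
    ((∃ ε : ℝ, 0 < ε ∧ ∀ x, (γ + ε) * ‖x‖ ^ 2 ≤ ‖A x‖ ^ 2) →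
      (∃ c : ℝ, ∀ x, (c : EReal) ≤ f x) → (∃ x, f x ≠ ⊤) →
      (∃ β : ℝ, 0 < β ∧ EStrongConvexOn β Jγ) ∧ ∃! xhat, ∀ y, Jγ xhat ≤ Jγ y) ∧
    (∀ xhat, (∀ y, Jγ xhat ≤ Jγ y) → f xhat = SgammaE γ (SgammaE γ f) xhat →
      ∀ y, J xhat ≤ J y) := by
  intro J Jγ
  have hle : Jγ ≤ J := regularizedLeastSquares_mono (SgammaE_SgammaE_le γ f) A d
  have hlsc : LowerSemicontinuous Jγ :=
    lowerSemicontinuous_regularizedLeastSquares (lowerSemicontinuous_SgammaE_s15 γ _) A d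
  refine ⟨fun hA => ?_, ?_, fun xhat hmin heq y => ?_⟩
  · have hconv : EConvexOn Jγ := eStrongConvexOn_zero.1 <|
      eStrongConvexOn_regularizedLeastSquares_SgammaE (by simpa using hA) _ d
    exact ⟨hconv, le_lscConvexEnvelope hlsc hconv hle⟩
  · rintro ⟨ε, hε, hA⟩ ⟨c, hc⟩ ⟨x₀, hx₀⟩
    have hconv : EStrongConvexOn ε Jγ := eStrongConvexOn_regularizedLeastSquares_SgammaE hA _ d
    have hbdd : ∀ x, (c : EReal) ≤ Jγ x := fun x =>
      (le_SgammaE_SgammaE hγ hc x).trans (le_regularizedLeastSquares _ A d x)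
    have hproper : Jγ x₀ ≠ ⊤ :=
      ne_top_of_le_ne_top (EReal.add_ne_top hx₀ (EReal.coe_ne_top _)) (hle x₀)
    exact ⟨⟨ε, hε, hconv⟩, hconv.existsUnique_forall_le hε hlsc ⟨c, hbdd⟩ ⟨x₀, hproper⟩⟩
  · have hJ : J xhat = Jγ xhat := congrArg (· + _) heq
    exact hJ.trans_le ((hmin y).trans (hle y))

end RegularizedLeastSquares

/-- case `A*A ≥ γI`. With `𝒥(x) = f(x) + ½‖Ax-d‖²` and
`𝒥_γ(x) = S_γ²(f)(x) + ½‖Ax-d‖²`: (i) if `⟨A*Ax,x⟩ ≥ γ‖x‖²` then `𝒥_γ` is convex and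
`𝒥_γ ≤ CE(𝒥)`; (ii) if `⟨A*Ax,x⟩ ≥ (γ+ε)‖x‖²` for some `ε > 0` and `f` is proper, then `𝒥_γ`
is strongly convex and has a unique global minimizer; (iii) any global minimizer `x̂` of `𝒥_γ`
with `f(x̂) = S_γ²(f)(x̂)` is a global minimizer of `𝒥`. -/
theorem statement15 {V W : Type*}
    [NormedAddCommGroup V] [InnerProductSpace ℝ V] [CompleteSpace V]
    [TopologicalSpace.SeparableSpace V]
    [NormedAddCommGroup W] [InnerProductSpace ℝ W] [CompleteSpace W]
    [TopologicalSpace.SeparableSpace W]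
    (f : V → ℝ≥0∞) (A : V →L[ℝ] W) (d : W) (γ : ℝ) (hγ : 0 < γ) :
    ((∀ x : V, γ * ‖x‖ ^ 2 ≤ ⟪(ContinuousLinearMap.adjoint A) (A x), x⟫_ℝ) →
      EConvexOn (fun x => Sgamma2 γ f x + ((1 / 2 * ‖A x - d‖ ^ 2 : ℝ) : EReal)) ∧
      (∀ x : V, Sgamma2 γ f x + ((1 / 2 * ‖A x - d‖ ^ 2 : ℝ) : EReal) ≤
        lscConvexEnvelope (fun z => (f z : EReal) + ((1 / 2 * ‖A z - d‖ ^ 2 : ℝ) : EReal)) x)) ∧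
    ((∃ ε : ℝ, 0 < ε ∧
        ∀ x : V, (γ + ε) * ‖x‖ ^ 2 ≤ ⟪(ContinuousLinearMap.adjoint A) (A x), x⟫_ℝ) →
      (∃ x, f x ≠ ∞) →
      (∃ β : ℝ, 0 < β ∧ EConvexOn (fun x =>
          (Sgamma2 γ f x + ((1 / 2 * ‖A x - d‖ ^ 2 : ℝ) : EReal)) -
            ((β / 2 * ‖x‖ ^ 2 : ℝ) : EReal))) ∧
      (∃! xhat : V, ∀ y : V,
          Sgamma2 γ f xhat + ((1 / 2 * ‖A xhat - d‖ ^ 2 : ℝ) : EReal) ≤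
            Sgamma2 γ f y + ((1 / 2 * ‖A y - d‖ ^ 2 : ℝ) : EReal))) ∧
    (∀ xhat : V,
      (∀ y : V, Sgamma2 γ f xhat + ((1 / 2 * ‖A xhat - d‖ ^ 2 : ℝ) : EReal) ≤
          Sgamma2 γ f y + ((1 / 2 * ‖A y - d‖ ^ 2 : ℝ) : EReal)) →
      (f xhat : EReal) = Sgamma2 γ f xhat →
      ∀ y : V, (f xhat : EReal) + ((1 / 2 * ‖A xhat - d‖ ^ 2 : ℝ) : EReal) ≤
          (f y : EReal) + ((1 / 2 * ‖A y - d‖ ^ 2 : ℝ) : EReal)) := by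
  simp only [ContinuousLinearMap.adjoint_inner_left, real_inner_self_eq_norm_sq]
  obtain ⟨hi, hii, hiii⟩ := statement15_general (fun x => (f x : EReal)) A d hγ.le
  exact ⟨hi, fun hA hf => hii hA ⟨0, fun _ => EReal.coe_ennreal_nonneg _⟩ (by simpa using hf), hiii⟩
end
end
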